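/- Let H be a real Hilbert space, d ≥ 1 an integer, C ⊆ H a nonempty closed convex set with ‖x − y‖ ≤ d for all x, y ∈ C, T : C → C nonexpansive with Fix(T) ≠ ∅, and G : C → C a τ-contraction (0 ≤ τ < 1). Let (λ_n) ⊆ (0,1], h : ℕ → ℕ⁺ with λ_n ≥ 1/h(n) for all n, and χ : ℕ → ℕ with λ_i ≤ 1/(n+1) for all n ∈ ℕ and all i ≥ χ(n). Let v : ℕ → C satisfy v_n = (1−λ_n)·T(v_n) + λ_n·G(T(v_n)) for all n. Then for every ε ∈ (0,1] and every g : ℕ → ℕ there exists n ≤ Ξ(ε/2, m ↦ m + g(m), χ, h, d, τ) such that ‖v_i − v_j‖ ≤ ε for all i, j ∈ [n; n + g(n)]; i.e. Ξ(ε/2, m ↦ m + g(m), χ, h, d, τ) is a rate of metastability for the resolvent sequence (v_n). -/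

import Mathlib

open scoped RealInnerProductSpace

/-- `fM f n = max {f i : 1 ≤ i ≤ n}`. -/
def fM (f : ℕ → ℕ) (n : ℕ) : ℕ := (Finset.Icc 1 n).sup f

/-- `ftilde d f n = max {fᴹ(16·d·n²), 16·d·n²}`. -/
def ftilde (d : ℕ) (f : ℕ → ℕ) (n : ℕ) : ℕ := max (fM f (16 * d * n ^ 2)) (16 * d * n ^ 2)

/-- `fIt d nε f i = f̃^(nε^i)`, the `nε^i`-fold iterate of `f̃`. -/
def fIt (d nε : ℕ) (f : ℕ → ℕ) (i : ℕ) (k : ℕ) : ℕ := (ftilde d f)^[nε ^ i] k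

/-- `ftildeI d nε f i n = max {fᵢᴹ(16·d·n²), 16·d·n²}`. -/
def ftildeI (d nε : ℕ) (f : ℕ → ℕ) (i : ℕ) (n : ℕ) : ℕ :=
  max (fM (fIt d nε f i) (16 * d * n ^ 2)) (16 * d * n ^ 2)

/-- The recursively defined sequence `k₀ := f̃₀^(nε)(1)`, `k_{i+1} := f̃ᵢ^(nε)(kᵢ)`. -/
def kSeq (d nε : ℕ) (f : ℕ → ℕ) : ℕ → ℕ
  | 0 => (ftildeI d nε f 0)^[nε] 1
  | (i + 1) => (ftildeI d nε f i)^[nε] (kSeq d nε f i)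

/-- `Kdef d τ ε̃ f = k_{i₀}` where `n_ε̃ := ⌈8d⁴/ε̃⁴⌉` and `i₀` is the least `i`
with `τ^(i+1) ≤ ε̃/(6d²)`. -/
noncomputable def Kdef (d : ℕ) (τ εt : ℝ) (f : ℕ → ℕ) : ℕ :=
  kSeq d ⌈8 * (d : ℝ) ^ 4 / εt ^ 4⌉₊ f
    (sInf {i : ℕ | τ ^ (i + 1) ≤ εt / (6 * (d : ℝ) ^ 2)})

/-- `fM0 F n = max {F i : 0 ≤ i ≤ n}` (for functions on ℕ). -/
def fM0 (F : ℕ → ℕ) (n : ℕ) : ℕ := (Finset.range (n + 1)).sup F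

/-- `gTil g n = max {n, g n}`. -/
def gTil (g : ℕ → ℕ) (n : ℕ) : ℕ := max n (g n)

/-- The counterfunction majorant `f(n) := ⌈6d·hᴹ(g̃ᴹ(χ(d·n)))/((1−τ)(ε/2)²)⌉`. -/
noncomputable def fXi (ε τ : ℝ) (g χ h : ℕ → ℕ) (d : ℕ) (n : ℕ) : ℕ :=
  ⌈6 * (d : ℝ) * (fM0 h (fM0 (gTil g) (χ (d * n))) : ℝ) / ((1 - τ) * (ε / 2) ^ 2)⌉₊

/-- The quantity `K = k_{i₀}` occurring in the definition of `Ξ(ε, g, χ, h, d, τ)`,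
with `ε₁ := (1−τ)(ε/2)²/2`, `ε_d := ε₁²/(2d²)` and `ε̃ := ((1−τ)²/(6+8d))·ε_d`. -/
noncomputable def KXi (ε : ℝ) (g χ h : ℕ → ℕ) (d : ℕ) (τ : ℝ) : ℕ :=
  Kdef d τ ((1 - τ) ^ 2 / (6 + 8 * (d : ℝ)) *
    (((1 - τ) * (ε / 2) ^ 2 / 2) ^ 2 / (2 * (d : ℝ) ^ 2))) (fXi ε τ g χ h d)

/-- The rate of metastability `Ξ(ε, g, χ, h, d, τ) := χ(d·k_{i₀})`. -/
noncomputable def XiDef (ε : ℝ) (g χ h : ℕ → ℕ) (d : ℕ) (τ : ℝ) : ℕ :=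
  χ (d * KXi ε g χ h d τ)

section helpers

variable {H : Type*} [NormedAddCommGroup H] [InnerProductSpace ℝ H]

lemma aux_mono (T : H → H) (z w u : H) (l m : ℝ) (hm : 0 < m) (hml : m ≤ l) (hl : l ≤ 1)
    (hT : ‖T z - T w‖ ≤ ‖z - w‖)
    (hz : z = (1 - l) • T z + l • u) (hw : w = (1 - m) • T w + m • u) :
    ‖z - u‖ ^ 2 + ‖w - z‖ ^ 2 ≤ ‖w - u‖ ^ 2 := by
  obtain ⟨p, hp⟩ : ∃ p, p = z - u := ⟨_, rfl⟩
  obtain ⟨q, hq⟩ : ∃ q, q = w - u := ⟨_, rfl⟩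
  have hzw : z - w = p - q := by rw [hp, hq]; abel
  have hp' : p = (1 - l) • (T z - u) := by
    rw [hp]; nth_rewrite 1 [hz]; module
  have hq' : q = (1 - m) • (T w - u) := by
    rw [hq]; nth_rewrite 1 [hw]; module
  have h1 : (1 - m) • p - (1 - l) • q = ((1 - l) * (1 - m)) • (T z - T w) := by
    rw [hp', hq']; module
  have h2 : (inner ℝ ((1 - m) • p - (1 - l) • q) (p - q)) ≤ (1 - l) * (1 - m) * ‖p - q‖ ^ 2 := by
    rw [h1, real_inner_smul_left]
    have h3 : (inner ℝ (T z - T w) (p - q)) ≤ ‖p - q‖ ^ 2 := by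
      refine (real_inner_le_norm _ _).trans ?_
      rw [hzw] at hT
      nlinarith [norm_nonneg (p - q)]
    exact mul_le_mul_of_nonneg_left h3 (mul_nonneg (by linarith) (by linarith))
  have e1 : ‖p - q‖ ^ 2 = (inner ℝ (p) (p)) - 2 * (inner ℝ (p) (q)) + (inner ℝ (q) (q)) := by
    rw [norm_sub_sq_real, real_inner_self_eq_norm_sq, real_inner_self_eq_norm_sq]
  have e2 : (inner ℝ ((1 - m) • p - (1 - l) • q) (p - q)) =
      (1 - m) * (inner ℝ (p) (p)) - (1 - m) * (inner ℝ (p) (q)) - (1 - l) * (inner ℝ (p) (q)) + (1 - l) * (inner ℝ (q) (q)) := by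
    simp only [inner_sub_left, inner_sub_right, real_inner_smul_left, real_inner_comm p q]
    ring
  have key : (l - m) * ((inner ℝ (p) (p)) - (inner ℝ (p) (q))) + m * (1 - l) * ‖p - q‖ ^ 2 ≤ 0 := by
    rw [e2, e1] at h2; rw [e1]; linarith
  have goal' : (inner ℝ (p) (p)) - (inner ℝ (p) (q)) ≤ 0 := by
    rcases hml.lt_or_eq with hlt | heq
    · have : 0 ≤ m * (1 - l) * ‖p - q‖ ^ 2 := by
        have : 0 ≤ 1 - l := by linarith
        positivity
      by_contra hc
      push Not at hc
      nlinarith [mul_pos (sub_pos.2 hlt) hc]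
    · rcases hl.lt_or_eq with hl1 | hl1
      · have h0 : ‖p - q‖ ^ 2 ≤ 0 := by
          subst heq
          by_contra hc
          push Not at hc
          nlinarith [mul_pos (mul_pos hm (sub_pos.2 hl1)) hc]
        have : p - q = 0 := by
          rw [← norm_eq_zero]; exact pow_eq_zero_iff two_ne_zero |>.1 (le_antisymm h0 (by positivity))
        have : p = q := sub_eq_zero.1 this
        rw [this]; simp
      · have : p = 0 := by rw [hp', hl1]; simp
        rw [this]; simp
  have e3 : ‖w - z‖ = ‖p - q‖ := by rw [norm_sub_rev, hzw]
  rw [e3, ← hp, ← hq, e1, ← real_inner_self_eq_norm_sq, ← real_inner_self_eq_norm_sq]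
  linarith

lemma aux_contr (a b x y s t : H) (l : ℝ) (hl0 : 0 < l) (hl : l ≤ 1)
    (hab : ‖a - b‖ ≤ ‖x - y‖) (hx : x = (1 - l) • a + l • s) (hy : y = (1 - l) • b + l • t) :
    ‖x - y‖ ≤ ‖s - t‖ := by
  have h1 : x - y = (1 - l) • (a - b) + l • (s - t) := by
    nth_rewrite 1 [hx]; nth_rewrite 1 [hy]; module
  have h2 : ‖x - y‖ ≤ (1 - l) * ‖a - b‖ + l * ‖s - t‖ := by
    nth_rewrite 1 [h1]
    refine (norm_add_le _ _).trans ?_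
    rw [norm_smul, norm_smul, Real.norm_of_nonneg hl0.le,
      Real.norm_of_nonneg (sub_nonneg.2 hl)]
  have h3 := mul_le_mul_of_nonneg_left hab (sub_nonneg.2 hl)
  have h4 : l * ‖x - y‖ ≤ l * ‖s - t‖ := by linarith
  exact le_of_mul_le_mul_left h4 hl0

lemma aux_exists [CompleteSpace H] (C : Set H) (hne : C.Nonempty) (hcl : IsClosed C)
    (hcv : Convex ℝ C) (T : H → H) (hTm : Set.MapsTo T C C)
    (hT : ∀ x ∈ C, ∀ y ∈ C, ‖T x - T y‖ ≤ ‖x - y‖) (u : H) (hu : u ∈ C)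
    (l : ℝ) (hl0 : 0 < l) (hl : l ≤ 1) :
    ∃ z ∈ C, z = (1 - l) • T z + l • u := by
  have hm : ∀ x ∈ C, (1 - l) • T x + l • u ∈ C := fun x hx =>
    hcv (hTm hx) hu (by linarith) hl0.le (by ring)
  have : CompleteSpace C := hcl.completeSpace_coe
  have : Nonempty C := hne.to_subtype
  let S : C → C := fun x => ⟨(1 - l) • T x + l • u, hm x x.2⟩
  have hS : ContractingWith (Real.toNNReal (1 - l)) S := by
    refine ⟨?_, LipschitzWith.of_dist_le_mul fun x y => ?_⟩
    · rw [← NNReal.coe_lt_coe, Real.coe_toNNReal _ (by linarith)]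
      simpa using hl0
    · rw [Real.coe_toNNReal _ (by linarith), Subtype.dist_eq, Subtype.dist_eq, dist_eq_norm,
        dist_eq_norm]
      have : ((S x : H)) - (S y : H) = (1 - l) • (T x - T y) := by
        simp only [S]; module
      rw [this, norm_smul, Real.norm_of_nonneg (sub_nonneg.2 hl)]
      exact mul_le_mul_of_nonneg_left (hT x x.2 y y.2) (sub_nonneg.2 hl)
  have hf := hS.fixedPoint_isFixedPt
  refine ⟨(ContractingWith.fixedPoint S hS : C), (ContractingWith.fixedPoint S hS).2, ?_⟩
  exact (congrArg Subtype.val hf).symm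

lemma aux_pigeon (M : ℕ) (hM : 0 < M) (A : ℕ → ℝ) (D : ℝ) (h0 : 0 ≤ A 0) (hD : A M ≤ D) :
    ∃ p < M, A (p + 1) - A p ≤ D / M := by
  by_contra hc
  push Not at hc
  have hs : ∑ p ∈ Finset.range M, (A (p + 1) - A p) = A M - A 0 := Finset.sum_range_sub A M
  have : ∑ p ∈ Finset.range M, D / M < ∑ p ∈ Finset.range M, (A (p + 1) - A p) :=
    Finset.sum_lt_sum_of_nonempty (by simpa using hM.ne') fun p hp => hc p (Finset.mem_range.1 hp)
  rw [hs] at this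
  have hM' : (M : ℝ) ≠ 0 := by exact_mod_cast hM.ne'
  simp only [Finset.sum_const, Finset.card_range, nsmul_eq_mul] at this
  rw [mul_div_cancel₀ _ hM'] at this
  linarith

lemma aux_main [CompleteSpace H]
    (d : ℝ) (hd : 0 ≤ d)
    (C : Set H) (hne : C.Nonempty) (hcl : IsClosed C) (hcv : Convex ℝ C)
    (hbd : ∀ x ∈ C, ∀ y ∈ C, ‖x - y‖ ≤ d)
    (T : H → H) (hTm : Set.MapsTo T C C)
    (hT : ∀ x ∈ C, ∀ y ∈ C, ‖T x - T y‖ ≤ ‖x - y‖)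
    (τ : ℝ) (hτ0 : 0 ≤ τ)
    (G : H → H) (hGm : Set.MapsTo G C C)
    (hG : ∀ x ∈ C, ∀ y ∈ C, ‖G x - G y‖ ≤ τ * ‖x - y‖)
    (lam : ℕ → ℝ) (hlam : ∀ n, lam n ∈ Set.Ioc (0 : ℝ) 1)
    (v : ℕ → H) (hvC : ∀ n, v n ∈ C)
    (hv : ∀ n, v n = (1 - lam n) • T (v n) + lam n • G (T (v n)))
    (M : ℕ) (hM : 0 < M) (b : ℕ → ℝ) (hb : ∀ j, b j ∈ Set.Ioc (0 : ℝ) 1) (hba : Antitone b)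
    (e : ℝ) (he : 0 ≤ e) (hMe : d ^ 2 / M ≤ e ^ 2) (δ : ℝ) (hδ0 : 0 ≤ δ) (hδ : τ * δ + e ≤ δ) (m : ℕ) :
    ∀ r : ℕ, ∃ s, s + r ≤ r * M ^ m ∧ ∃ c ∈ C, ∀ i, b (s + r) ≤ lam i → lam i ≤ b s →
      ‖v i - c‖ ≤ τ ^ m * d + δ := by
  induction m with
  | zero =>
    intro r
    obtain ⟨c, hc⟩ := hne
    refine ⟨0, by simp, c, hc, fun i _ _ => ?_⟩
    have := hbd _ (hvC i) _ hc
    simp only [pow_zero, one_mul]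
    linarith
  | succ m ih =>
    intro r
    obtain ⟨s, hs, c, hc, hvc⟩ := ih (r * M)
    have hu : G (T c) ∈ C := hGm (hTm hc)
    have hex : ∀ l : ℝ, ∃ z ∈ C, 0 < l → l ≤ 1 → z = (1 - l) • T z + l • G (T c) := by
      intro l
      by_cases hl : 0 < l ∧ l ≤ 1
      · obtain ⟨z, hz, h⟩ := aux_exists C hne hcl hcv T hTm hT _ hu l hl.1 hl.2
        exact ⟨z, hz, fun _ _ => h⟩
      · exact ⟨c, hc, fun h1 h2 => absurd ⟨h1, h2⟩ hl⟩
    choose z hzC hz using hex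
    have hmono : ∀ l m : ℝ, 0 < m → m ≤ l → l ≤ 1 →
        ‖z l - G (T c)‖ ^ 2 + ‖z m - z l‖ ^ 2 ≤ ‖z m - G (T c)‖ ^ 2 := fun l m h1 h2 h3 =>
      aux_mono T _ _ _ l m h1 h2 h3 (hT _ (hzC _) _ (hzC _)) (hz l (h1.trans_le h2) h3)
        (hz m h1 (h2.trans h3))
    obtain ⟨p, hp, hpA⟩ := aux_pigeon M hM (fun p => ‖z (b (s + p * r)) - G (T c)‖ ^ 2) (d ^ 2)
      (by positivity) (pow_le_pow_left₀ (norm_nonneg _) (hbd _ (hzC _) _ hu) 2)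
    refine ⟨s + p * r, ?_, z (b (s + p * r)), hzC _, ?_⟩
    · have : (p + 1) * r ≤ M * r := Nat.mul_le_mul_right _ hp
      calc s + p * r + r = s + (p + 1) * r := by ring
        _ ≤ s + r * M := by linarith
        _ ≤ _ := hs
        _ = _ := by ring
    · intro i hi1 hi2
      have hli := hlam i
      have h1 : ‖v i - c‖ ≤ τ ^ m * d + δ := by
        refine hvc i (le_trans (hba ?_) hi1) (hi2.trans (hba ?_))
        · have : (p + 1) * r ≤ M * r := Nat.mul_le_mul_right _ hp
          linarith
        · exact Nat.le_add_right _ _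
      have h2 : ‖v i - z (lam i)‖ ≤ τ * (τ ^ m * d + δ) := by
        refine (aux_contr _ _ _ _ _ _ (lam i) hli.1 hli.2 (hT _ (hvC i) _ (hzC _)) (hv i)
          (hz _ hli.1 hli.2)).trans ?_
        refine (hG _ (hTm (hvC i)) _ (hTm hc)).trans ?_
        exact mul_le_mul_of_nonneg_left ((hT _ (hvC i) _ hc).trans h1) hτ0
      have h3 : ‖z (lam i) - z (b (s + p * r))‖ ^ 2 ≤ e ^ 2 := by
        have q1 := hmono _ _ hli.1 hi2 (hb _).2
        have q2 := hmono _ _ (hb _).1 hi1 hli.2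
        have q3 : s + (p + 1) * r = s + p * r + r := by ring
        simp only [q3] at hpA
        have := sq_nonneg ‖z (b (s + p * r + r)) - z (lam i)‖
        linarith
      have h4 : ‖z (lam i) - z (b (s + p * r))‖ ≤ e := abs_le_of_sq_le_sq' h3 he |>.2
      have h5 := norm_sub_le_norm_sub_add_norm_sub (v i) (z (lam i)) (z (b (s + p * r)))
      rw [pow_succ]
      nlinarith

end helpers

lemma le_ftilde (d : ℕ) (hd : 1 ≤ d) (f : ℕ → ℕ) (n : ℕ) : n ≤ ftilde d f n := by
  refine le_trans ?_ (le_max_right _ _)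
  nlinarith [Nat.le_self_pow two_ne_zero n, Nat.zero_le (n ^ 2)]

lemma f_le_ftilde (d : ℕ) (hd : 1 ≤ d) (f : ℕ → ℕ) (n : ℕ) (hn : 1 ≤ n) : f n ≤ ftilde d f n := by
  refine le_trans ?_ (le_max_left _ _)
  refine Finset.le_sup (f := f) (Finset.mem_Icc.2 ⟨hn, ?_⟩)
  nlinarith [Nat.le_self_pow two_ne_zero n, Nat.zero_le (n ^ 2)]

lemma ftilde_mono (d : ℕ) (f : ℕ → ℕ) : Monotone (ftilde d f) := by
  intro a b hab
  have h : 16 * d * a ^ 2 ≤ 16 * d * b ^ 2 := by gcongr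
  exact max_le_max (Finset.sup_mono (Finset.Icc_subset_Icc_right h)) h

lemma kSeq_ge_one (d : ℕ) (hd : 1 ≤ d) (n : ℕ) (f : ℕ → ℕ) (i : ℕ) : 1 ≤ kSeq d n f i := by
  have h : ∀ i m k, k ≤ (ftildeI d n f i)^[m] k := fun i m k =>
    Function.id_le_iterate_of_id_le (fun x => le_ftilde d hd (fIt d n f i) x) m k
  induction i with
  | zero => exact h 0 n 1
  | succ i ih => exact ih.trans (h i n _)

lemma iter_ftildeI (d : ℕ) (hd : 1 ≤ d) (n : ℕ) (f : ℕ → ℕ) (i m : ℕ) :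
    ∀ k, 1 ≤ k → (ftilde d f)^[n ^ i * m] k ≤ (ftildeI d n f i)^[m] k := by
  induction m with
  | zero => intro k _; simp
  | succ m ih =>
    intro k hk
    rw [Nat.mul_succ, Function.iterate_add_apply, Function.iterate_succ_apply]
    have h1 : (ftilde d f)^[n ^ i] k ≤ ftildeI d n f i k := f_le_ftilde d hd (fIt d n f i) k hk
    have h2 : 1 ≤ ftildeI d n f i k := hk.trans (le_ftilde d hd (fIt d n f i) k)
    exact ((ftilde_mono d f).iterate _ h1).trans (ih _ h2)

lemma kSeq_ge (d : ℕ) (hd : 1 ≤ d) (n : ℕ) (f : ℕ → ℕ) (i : ℕ) :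
    (ftilde d f)^[n ^ (max i 1)] 1 ≤ kSeq d n f i := by
  cases i with
  | zero =>
    have := iter_ftildeI d hd n f 0 n 1 le_rfl
    simpa [kSeq] using this
  | succ i =>
    have h := iter_ftildeI d hd n f i n 1 le_rfl
    have h1 := kSeq_ge_one d hd n f i
    have h2 := iter_ftildeI d hd n f i n _ h1
    rw [max_eq_left (by omega), pow_succ]
    exact ((ftilde_mono d f).iterate _ h1).trans h2

lemma le_fM0 (F : ℕ → ℕ) (n m : ℕ) (h : m ≤ n) : F m ≤ fM0 F n :=
  Finset.le_sup (f := F) (Finset.mem_range.2 (by omega))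


/-- `Ξ(ε/2, m ↦ m + g(m), χ, h, d, τ)` is a rate of metastability for the resolvent
sequence `v_n = (1−λ_n)·T(v_n) + λ_n·G(T(v_n))`. -/
theorem resolvent_rate_of_metastability
    {H : Type*} [NormedAddCommGroup H] [InnerProductSpace ℝ H] [CompleteSpace H]
    (d : ℕ) (hd : 1 ≤ d)
    (C : Set H) (hne : C.Nonempty) (hcl : IsClosed C) (hcv : Convex ℝ C)
    (hbd : ∀ x ∈ C, ∀ y ∈ C, ‖x - y‖ ≤ (d : ℝ))
    (T : H → H) (hTm : Set.MapsTo T C C)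
    (hT : ∀ x ∈ C, ∀ y ∈ C, ‖T x - T y‖ ≤ ‖x - y‖)
    (hfix : ∃ p ∈ C, T p = p)
    (τ : ℝ) (hτ0 : 0 ≤ τ) (hτ1 : τ < 1)
    (G : H → H) (hGm : Set.MapsTo G C C)
    (hG : ∀ x ∈ C, ∀ y ∈ C, ‖G x - G y‖ ≤ τ * ‖x - y‖)
    (lam : ℕ → ℝ) (hlam : ∀ n, lam n ∈ Set.Ioc (0 : ℝ) 1)
    (h : ℕ → ℕ) (hh : ∀ n, 1 ≤ h n) (hlamh : ∀ n, 1 / (h n : ℝ) ≤ lam n)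
    (χ : ℕ → ℕ) (hχ : ∀ n : ℕ, ∀ i ≥ χ n, lam i ≤ 1 / ((n : ℝ) + 1))
    (v : ℕ → H) (hvC : ∀ n, v n ∈ C)
    (hv : ∀ n, v n = (1 - lam n) • T (v n) + lam n • G (T (v n)))
    (ε : ℝ) (hε : ε ∈ Set.Ioc (0 : ℝ) 1) (g : ℕ → ℕ) :
    ∃ n ≤ XiDef (ε / 2) (fun m => m + g m) χ h d τ,
      ∀ i ∈ Set.Icc n (n + g n), ∀ j ∈ Set.Icc n (n + g n), ‖v i - v j‖ ≤ ε := by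
  have hdR : (1 : ℝ) ≤ d := by exact_mod_cast hd
  obtain ⟨hε0, hε1⟩ := hε
  have hτ : 0 < 1 - τ := by linarith
  set f : ℕ → ℕ := fXi (ε / 2) τ (fun m => m + g m) χ h d with hf
  obtain ⟨et, het⟩ : ∃ et, et = (1 - τ) ^ 2 / (6 + 8 * (d : ℝ)) *
    (((1 - τ) * (ε / 2 / 2) ^ 2 / 2) ^ 2 / (2 * (d : ℝ) ^ 2)) := ⟨_, rfl⟩
  have het0 : 0 < et := by rw [het]; positivity
  have het1 : et ≤ (1 - τ) * (ε ^ 2 / 16) := by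
    have a1 : (1 - τ) ^ 2 / (6 + 8 * (d : ℝ)) ≤ 1 - τ := by
      rw [div_le_iff₀ (by positivity)]
      nlinarith
    have a0 : (1 - τ) * (ε / 2 / 2) ^ 2 / 2 ≤ ε / 4 := by
      have : (1 - τ) * (ε / 2 / 2) ^ 2 ≤ 1 * (ε / 2 / 2) ^ 2 := by
        gcongr; linarith
      nlinarith
    have a2 : ((1 - τ) * (ε / 2 / 2) ^ 2 / 2) ^ 2 / (2 * (d : ℝ) ^ 2) ≤ ε ^ 2 / 16 := by
      rw [div_le_iff₀ (by positivity)]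
      have : ((1 - τ) * (ε / 2 / 2) ^ 2 / 2) ^ 2 ≤ (ε / 4) ^ 2 := by gcongr
      have hq : 0 < ε ^ 2 := by positivity
      have hd2 : (1 : ℝ) ≤ (d : ℝ) ^ 2 := one_le_pow₀ hdR
      nlinarith [mul_le_mul_of_nonneg_left hd2 hq.le]
    rw [het]
    gcongr
  obtain ⟨n, hn⟩ : ∃ n, n = ⌈8 * (d : ℝ) ^ 4 / et ^ 4⌉₊ := ⟨_, rfl⟩
  obtain ⟨i0, hi0⟩ : ∃ i0, i0 = sInf {i : ℕ | τ ^ (i + 1) ≤ et / (6 * (d : ℝ) ^ 2)} := ⟨_, rfl⟩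
  have hK : KXi (ε / 2) (fun m => m + g m) χ h d τ = kSeq d n f i0 := by
    rw [hn, hi0, het]; rfl
  have hi0' : τ ^ (i0 + 1) ≤ et / (6 * (d : ℝ) ^ 2) := by
    have : i0 ∈ {i : ℕ | τ ^ (i + 1) ≤ et / (6 * (d : ℝ) ^ 2)} := by
      rw [hi0]
      apply Nat.sInf_mem
      obtain ⟨k, hk⟩ := exists_pow_lt_of_lt_one (show 0 < et / (6 * (d : ℝ) ^ 2) by positivity) hτ1
      refine ⟨k, le_trans ?_ hk.le⟩
      exact pow_le_pow_of_le_one hτ0 hτ1.le (Nat.le_succ k)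
    exact this
  have hn0 : 0 < n := by rw [hn]; apply Nat.ceil_pos.2; positivity
  have hne8 : 8 * (d : ℝ) ^ 4 / et ^ 4 ≤ n := by rw [hn]; exact Nat.le_ceil _
  have hetle : et ≤ ε ^ 2 / 16 := by nlinarith [sq_nonneg ε]
  have hetle1 : et ≤ 1 := by nlinarith
  -- the geometric part
  have hgeo : τ ^ (max i0 1) * d ≤ ε / 4 := by
    have h1 : (τ ^ (max i0 1)) ^ 2 ≤ et / (6 * (d : ℝ) ^ 2) := by
      refine le_trans ?_ hi0'
      rw [← pow_mul]
      exact pow_le_pow_of_le_one hτ0 hτ1.le (by omega)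
    have h2 : (τ ^ (max i0 1) * d) ^ 2 ≤ (ε / 4) ^ 2 := by
      rw [le_div_iff₀ (by positivity)] at h1
      rw [mul_pow]
      nlinarith [sq_nonneg (τ ^ (max i0 1) * d)]
    exact (abs_le_of_sq_le_sq' h2 (by positivity)).2
  have hF1 : ∀ j, 1 ≤ (ftilde d f)^[j] 1 := fun j =>
    Function.id_le_iterate_of_id_le (fun x => le_ftilde d hd f x) j 1
  have hFm : Monotone fun j => (ftilde d f)^[j] 1 :=
    fun a b hab => Function.monotone_iterate_of_id_le (fun x => le_ftilde d hd f x) hab 1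
  have hFR : ∀ j, (1 : ℝ) ≤ ((ftilde d f)^[j] 1 : ℕ) := fun j => by exact_mod_cast hF1 j
  obtain ⟨s, hs, c, hc, hvc⟩ := aux_main (d : ℝ) (by positivity) C hne hcl hcv hbd T hTm hT τ hτ0
    G hGm hG lam hlam v hvC hv n hn0 (fun j => 1 / (((ftilde d f)^[j] 1 : ℕ) : ℝ))
    (fun j => ⟨by have := hFR j; positivity, by
      have := hFR j
      rw [div_le_one (by linarith)]; exact this⟩)
    (fun a b hab => by
      have := hFR a
      have h2 : (((ftilde d f)^[a] 1 : ℕ) : ℝ) ≤ (((ftilde d f)^[b] 1 : ℕ) : ℝ) := by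
        exact_mod_cast hFm hab
      exact one_div_le_one_div_of_le (by linarith) h2)
    (et ^ 2) (by positivity)
    (by
      have hn0' : (0 : ℝ) < n := by exact_mod_cast hn0
      rw [div_le_iff₀ hn0']
      rw [div_le_iff₀ (by positivity)] at hne8
      have hd4 : (d : ℝ) ^ 2 ≤ (d : ℝ) ^ 4 := pow_le_pow_right₀ hdR (by norm_num)
      have : (0 : ℝ) ≤ (d : ℝ) ^ 4 := by positivity
      calc (d : ℝ) ^ 2 ≤ 8 * (d : ℝ) ^ 4 := by linarith
        _ ≤ n * et ^ 4 := hne8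
        _ = _ := by ring)
    (et ^ 2 / (1 - τ)) (by positivity)
    (by
      apply le_of_eq
      field_simp
      ring) (max i0 1) 1
  have hδ : et ^ 2 / (1 - τ) ≤ ε / 4 := by
    rw [div_le_iff₀ hτ]
    have : et ^ 2 ≤ et := by nlinarith
    have : (1 - τ) * (ε ^ 2 / 16) ≤ (1 - τ) * (ε / 4) :=
      mul_le_mul_of_nonneg_left (by nlinarith) hτ.le
    linarith
  obtain ⟨k, hk⟩ : ∃ k, k = (ftilde d f)^[s] 1 := ⟨_, rfl⟩
  have hk1 : 1 ≤ k := hk ▸ hF1 s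
  have hkK : k ≤ kSeq d n f i0 := by
    refine le_trans ?_ (kSeq_ge d hd n f i0)
    rw [hk]; exact hFm (by omega)
  unfold XiDef
  rw [hK]
  refine ⟨min (χ (d * k)) (χ (d * kSeq d n f i0)), min_le_right _ _, ?_⟩
  set N := min (χ (d * k)) (χ (d * kSeq d n f i0)) with hN
  have hkR : (1 : ℝ) ≤ k := by exact_mod_cast hk1
  have main : ∀ i ∈ Set.Icc N (N + g N), ‖v i - c‖ ≤ ε / 2 := by
    intro i hi
    have hup : lam i ≤ 1 / (k : ℝ) := by
      obtain ⟨q, hq1, hq2⟩ : ∃ q, k ≤ q ∧ χ (d * q) ≤ i := by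
        rcases min_choice (χ (d * k)) (χ (d * kSeq d n f i0)) with hc | hc
        · exact ⟨k, le_rfl, by rw [← hc]; exact hi.1⟩
        · exact ⟨_, hkK, by rw [← hc]; exact hi.1⟩
      refine (hχ _ i hq2).trans (one_div_le_one_div_of_le (by linarith) ?_)
      have : k ≤ d * q + 1 := by nlinarith
      exact_mod_cast this
    have hlow : 1 / (((ftilde d f)^[s + 1] 1 : ℕ) : ℝ) ≤ lam i := by
      refine le_trans (one_div_le_one_div_of_le ?_ ?_) (hlamh i)
      · exact_mod_cast hh i
      · rw [Function.iterate_succ_apply', ← hk]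
        have h1 : h i ≤ fM0 h (fM0 (gTil fun m => m + g m) (χ (d * k))) := by
          apply le_fM0
          refine le_trans ?_ (le_fM0 _ _ N (min_le_left _ _))
          exact hi.2.trans (le_max_right _ _)
        have h2 : (h i : ℝ) ≤ f k := by
          rw [hf]; unfold fXi
          refine le_trans ?_ (Nat.le_ceil _)
          have h1' : (h i : ℝ) ≤ fM0 h (fM0 (gTil fun m => m + g m) (χ (d * k))) := by
            exact_mod_cast h1
          refine h1'.trans ?_
          rw [le_div_iff₀ (by positivity), mul_comm]
          refine mul_le_mul_of_nonneg_right ?_ (Nat.cast_nonneg _)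
          have : (1 - τ) * (ε / 2 / 2) ^ 2 ≤ 1 * 1 := by
            gcongr
            · linarith
            · nlinarith
          linarith
        refine h2.trans ?_
        exact_mod_cast f_le_ftilde d hd f k hk1
    have := hvc i hlow (by rw [← hk]; exact hup)
    linarith
  intro i hi j hj
  have h1 := main i hi
  have h2 := main j hj
  have h3 := norm_sub_le_norm_sub_add_norm_sub (v i) c (v j)
  rw [norm_sub_rev c] at h3
  linarith
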